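/- arXiv:2401.12968 — 3 statements merged into one kernel-verified Lean document; each statement's English description precedes it below -/
import Mathlib

section
/- For every half-integer S ≥ 1/2, α_GP(S) < α_GP(S+1), where α_GP(S) = inf_{ρ∈[−1,0)} f_S(ρ). -/
open Matrix MeasureTheory Filter
open scoped BigOperators RealInnerProductSpace Kronecker

noncomputable section

/-- The spin value `S = n/2` for a half-integer spin encoded by `n : ℕ` (`n ≥ 1` means `S ≥ 1/2`). -/
def spinVal (n : ℕ) : ℝ := (n : ℝ) / 2

/-- The Gauss hypergeometric function `₂F₁(1/2, 1/2; 5/2; x)`, defined by its power series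
`Σ_{k≥0} ((1/2)_k (1/2)_k)/((5/2)_k k!) x^k`, where `(a)_k` is the rising factorial. -/
def hypF (x : ℝ) : ℝ :=
  ∑' k : ℕ,
    ((∏ m ∈ Finset.range k, ((1:ℝ)/2 + m)) * (∏ m ∈ Finset.range k, ((1:ℝ)/2 + m))
      / ((∏ m ∈ Finset.range k, ((5:ℝ)/2 + m)) * (Nat.factorial k))) * x ^ k

/-- `F*(3, ρ) = (8/(3π)) ρ ₂F₁(1/2,1/2;5/2;ρ²)`. -/
def Fstar (ρ : ℝ) : ℝ := (8 / (3 * Real.pi)) * ρ * hypF (ρ ^ 2)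

/-- `f_S(ρ) = (1 − F*(3,ρ)) / (1 − ((S+1)/S) ρ)`. -/
def fS (S ρ : ℝ) : ℝ := (1 - Fstar ρ) / (1 - ((S + 1) / S) * ρ)

/-- `g(ρ) = (1 − F*(3,ρ)) / (1 − ρ)`. -/
def gBOV (ρ : ℝ) : ℝ := (1 - Fstar ρ) / (1 - ρ)

/-- `α_GP(S) = inf_{ρ ∈ [−1, 0)} f_S(ρ)`. -/
def alphaGP (S : ℝ) : ℝ := sInf (fS S '' Set.Ico (-1 : ℝ) 0)

/-- `α_BOV = inf_{ρ ∈ [−1, 0)} g(ρ)`. -/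
def alphaBOV : ℝ := sInf (gBOV '' Set.Ico (-1 : ℝ) 0)

lemma hypF_nonneg {x : ℝ} (hx : 0 ≤ x) : 0 ≤ hypF x := by
  unfold hypF
  refine tsum_nonneg fun k => ?_
  have h1 : 0 ≤ ∏ m ∈ Finset.range k, ((1:ℝ)/2 + m) :=
    Finset.prod_nonneg fun m _ => by positivity
  have h2 : 0 ≤ ∏ m ∈ Finset.range k, ((5:ℝ)/2 + m) :=
    Finset.prod_nonneg fun m _ => by positivity
  positivity

lemma hypF_le {x : ℝ} (hx : 0 ≤ x) (hx1 : x < 1) : hypF x ≤ (1 - x)⁻¹ := by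
  unfold hypF
  rw [← tsum_geometric_of_lt_one hx hx1]
  have h1 : ∀ k : ℕ, 0 ≤ ∏ m ∈ Finset.range k, ((1:ℝ)/2 + m) := fun k =>
    Finset.prod_nonneg fun m _ => by positivity
  have h2 : ∀ k : ℕ, 0 < ∏ m ∈ Finset.range k, ((5:ℝ)/2 + m) := fun k =>
    Finset.prod_pos fun m _ => by positivity
  have h3 : ∀ k : ℕ, ∏ m ∈ Finset.range k, ((1:ℝ)/2 + m) ≤
      ∏ m ∈ Finset.range k, ((5:ℝ)/2 + m) := fun k =>
    Finset.prod_le_prod (fun m _ => by positivity) fun m _ => by linarith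
  have h4 : ∀ k : ℕ, ∏ m ∈ Finset.range k, ((1:ℝ)/2 + m) ≤ (Nat.factorial k : ℝ) := fun k => by
    rw [← Finset.prod_range_add_one_eq_factorial]
    push_cast
    exact Finset.prod_le_prod (fun m _ => by positivity) fun m _ => by linarith
  have h5 : ∀ k : ℕ, ((∏ m ∈ Finset.range k, ((1:ℝ)/2 + m)) *
      (∏ m ∈ Finset.range k, ((1:ℝ)/2 + m))
      / ((∏ m ∈ Finset.range k, ((5:ℝ)/2 + m)) * (Nat.factorial k))) * x ^ k ≤ x ^ k := fun k => by
    apply mul_le_of_le_one_left (by positivity)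
    have hp : (0:ℝ) < Nat.factorial k := by positivity
    rw [div_le_one (mul_pos (h2 k) hp)]
    exact mul_le_mul (h3 k) (h4 k) (h1 k) (h2 k).le
  have hg := summable_geometric_of_lt_one hx hx1
  refine Summable.tsum_le_tsum h5 (Summable.of_nonneg_of_le (fun k => ?_) h5 hg) hg
  have := h1 k
  have := (h2 k).le
  positivity

lemma Fstar_nonpos {r : ℝ} (hr : r ≤ 0) : Fstar r ≤ 0 := by
  unfold Fstar
  have h := hypF_nonneg (sq_nonneg r)
  have hp : 0 ≤ 8 / (3 * Real.pi) := by positivity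
  exact mul_nonpos_of_nonpos_of_nonneg (mul_nonpos_of_nonneg_of_nonpos hp hr) h

lemma Fstar_pt : -(3/10) < Fstar (-(3/10)) := by
  unfold Fstar
  have h := hypF_le (x := (-(3/10)) ^ 2) (by norm_num) (by norm_num)
  have hpi := Real.pi_gt_three
  have hpi' := Real.pi_gt_d2
  have h8 : 8 / (3 * Real.pi) < 91 / 100 := by
    rw [div_lt_div_iff₀ (by positivity) (by norm_num)]
    linarith
  have hp : 0 < 8 / (3 * Real.pi) := by positivity
  have : 8 / (3 * Real.pi) * hypF ((-(3/10)) ^ 2) < 1 := by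
    calc _ ≤ 8 / (3 * Real.pi) * (1 - (-(3/10)) ^ 2)⁻¹ := by gcongr
      _ < 91 / 100 * (1 - (-(3/10)) ^ 2)⁻¹ := by
        apply mul_lt_mul_of_pos_right h8; norm_num
      _ = 1 := by norm_num
  nlinarith

lemma alpha_lt {S T : ℝ} (hS : 0 < S) (hST : S < T) : alphaGP S < alphaGP T := by
  obtain ⟨c, hc⟩ : ∃ c, c = (S + 1) / S := ⟨_, rfl⟩
  obtain ⟨d, hd⟩ : ∃ d, d = (T + 1) / T := ⟨_, rfl⟩
  have hT : 0 < T := hS.trans hST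
  have hd1 : 1 < d := by rw [hd, lt_div_iff₀ hT]; linarith
  have hcd : d < c := by
    rw [hc, hd, div_lt_div_iff₀ hT hS]; nlinarith
  have hlow : ∀ r ∈ Set.Ico (-1:ℝ) 0, 1 / (1 + c) ≤ fS S r := by
    rintro r ⟨h1, h2⟩
    have hF := Fstar_nonpos h2.le
    unfold fS
    rw [← hc]
    apply div_le_div₀ <;> nlinarith
  have hne : (Set.Ico (-1:ℝ) 0).Nonempty := ⟨-1, by norm_num⟩
  have hpos : 0 < alphaGP S := by
    have h0 : 0 < 1 / (1 + c) := by
      have : 0 < 1 + c := by linarith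
      positivity
    refine h0.trans_le (le_csInf (hne.image _) ?_)
    rintro _ ⟨r, hr, rfl⟩
    exact hlow r hr
  have hle : ∀ r ∈ Set.Ico (-1:ℝ) 0, alphaGP S ≤ fS S r := fun r hr =>
    csInf_le ⟨1 / (1 + c), by rintro _ ⟨r, hr, rfl⟩; exact hlow r hr⟩ ⟨r, hr, rfl⟩
  have hlt1 : alphaGP S < 1 := by
    refine (hle (-(3/10)) (by norm_num)).trans_lt ?_
    have := Fstar_pt
    unfold fS
    rw [← hc, div_lt_one (by linarith)]
    linarith
  set a := alphaGP S with ha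
  -- threshold
  obtain ⟨δ, hδ⟩ : ∃ δ, δ = (1 / a - 1) / (2 * d) := ⟨_, rfl⟩
  have ha1 : 0 < 1 / a - 1 := by
    have := (one_lt_div hpos).2 hlt1
    linarith
  have hδpos : 0 < δ := by rw [hδ]; exact div_pos ha1 (by linarith)
  have hdδ : d * δ = (1 / a - 1) / 2 := by rw [hδ]; field_simp
  have hdp : 0 < 1 + d * δ := by rw [hdδ]; linarith
  have k1 : a < 1 / (1 + d * δ) := by
    rw [lt_div_iff₀ hdp, hdδ]
    have : a * (1 / a) = 1 := by field_simp
    nlinarith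
  have k2 : a < a * ((1 + c * δ) / (1 + d * δ)) := by
    have : 1 < (1 + c * δ) / (1 + d * δ) := by
      rw [one_lt_div hdp]; nlinarith
    nlinarith
  refine (lt_min k1 k2).trans_le (le_csInf (hne.image _) ?_)
  rintro _ ⟨r, hr, rfl⟩
  have hF := Fstar_nonpos hr.2.le
  have hdr : 0 < 1 - d * r := by nlinarith [hr.2]
  have hcr : 0 < 1 - c * r := by nlinarith [hr.2]
  rcases le_total (-r) δ with h | h
  · refine (min_le_left _ _).trans ?_
    unfold fS
    rw [← hd]
    apply div_le_div₀ <;> nlinarith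
  · refine (min_le_right _ _).trans ?_
    have e : fS T r = fS S r * ((1 - c * r) / (1 - d * r)) := by
      unfold fS
      rw [← hd, ← hc, div_mul_div_cancel₀ hcr.ne']
    rw [e]
    have h3 : (1 + c * δ) / (1 + d * δ) ≤ (1 - c * r) / (1 - d * r) := by
      rw [div_le_div_iff₀ hdp hdr]
      nlinarith
    refine mul_le_mul (hle r hr) h3 ?_ (hpos.le.trans (hle r hr))
    have : 0 < 1 + c * δ := by nlinarith
    positivity

/-- For every half-integer `S ≥ 1/2`, `α_GP(S) < α_GP(S+1)`. -/
theorem alphaGP_strictMono (n : ℕ) (hn : 1 ≤ n) :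
    alphaGP (spinVal n) < alphaGP (spinVal n + 1) := by
  have h : (0:ℝ) < spinVal n := by
    unfold spinVal
    have : (0:ℝ) < n := by exact_mod_cast hn
    positivity
  exact alpha_lt h (by linarith)

end
end

section
/- For every half-integer S ≥ 1/2 and every ρ ∈ [−1,0), the strict inequalities (S/(S+1))² g(ρ) < f_S(ρ) < f_{S+1}(ρ) < g(ρ) hold. -/
open Matrix MeasureTheory Filter
open scoped BigOperators RealInnerProductSpace Kronecker

noncomputable section

/-- For every half-integer `S ≥ 1/2` and every `ρ ∈ [−1, 0)`,
`(S/(S+1))² g(ρ) < f_S(ρ) < f_{S+1}(ρ) < g(ρ)`. -/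
theorem fS_chain_inequalities (n : ℕ) (hn : 1 ≤ n) (ρ : ℝ) (hρ : ρ ∈ Set.Ico (-1 : ℝ) 0) :
    (spinVal n / (spinVal n + 1)) ^ 2 * gBOV ρ < fS (spinVal n) ρ
      ∧ fS (spinVal n) ρ < fS (spinVal n + 1) ρ
      ∧ fS (spinVal n + 1) ρ < gBOV ρ := by
  have hH : 0 ≤ hypF (ρ ^ 2) := by
    unfold hypF
    refine tsum_nonneg fun k => ?_
    have h1 : 0 ≤ ∏ m ∈ Finset.range k, ((5:ℝ)/2 + m) :=
      Finset.prod_nonneg fun m _ => by positivity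
    have h2 := mul_self_nonneg (∏ m ∈ Finset.range k, ((1:ℝ)/2 + m))
    exact mul_nonneg (div_nonneg h2 (mul_nonneg h1 (by positivity))) (by positivity)
  obtain ⟨_, h0⟩ := hρ
  have hA : 0 < 1 - Fstar ρ := by
    have hc : 0 ≤ 8 / (3 * Real.pi) * hypF (ρ ^ 2) :=
      mul_nonneg (by have := Real.pi_pos; positivity) hH
    have : Fstar ρ = ρ * (8 / (3 * Real.pi) * hypF (ρ ^ 2)) := by unfold Fstar; ring
    rw [this]
    nlinarith
  have hS : 0 < spinVal n := by
    unfold spinVal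
    have : (1:ℝ) ≤ n := by exact_mod_cast hn
    linarith
  unfold fS gBOV
  generalize spinVal n = S at hS ⊢
  generalize 1 - Fstar ρ = A at hA ⊢
  have e1 : (S + 1) / S = 1 + 1 / S := by field_simp
  have e2 : (S + 1 + 1) / (S + 1) = 1 + 1 / (S + 1) := by field_simp
  have hlt : 1 / (S + 1) < 1 / S := one_div_lt_one_div_of_lt hS (by linarith)
  have hp : 0 < 1 / (S + 1) := by positivity
  have e3 : S / (S + 1) = 1 / (1 + 1 / S) := by field_simp
  rw [e1, e2, e3]
  generalize 1 / S = a at *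
  generalize 1 / (S + 1) = b at *
  have ha : 0 < a := hp.trans hlt
  refine ⟨?_, ?_, ?_⟩
  · have hd : 0 < 1 - (1 + a) * ρ := by nlinarith
    have hd' : 0 < 1 - ρ := by linarith
    have hk : (1 / (1 + a)) ^ 2 * (A / (1 - ρ)) = A / ((1 + a) ^ 2 * (1 - ρ)) := by
      field_simp
    rw [hk]
    apply div_lt_div_of_pos_left hA hd
    nlinarith [mul_pos ha (neg_pos.2 h0), mul_pos (mul_pos ha ha) (neg_pos.2 h0), mul_pos ha ha]
  · apply div_lt_div_of_pos_left hA <;> nlinarith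
  · apply div_lt_div_of_pos_left hA <;> nlinarith

end
end

section
/- For every half-integer S ≥ 1/2, the infimum of f_S over the interval [−1, S/(S+1)) equals the infimum of f_S over [−1, 0), and this infimum is attained at some point of [−1, 0). -/
open Matrix MeasureTheory Filter
open scoped BigOperators RealInnerProductSpace Kronecker

noncomputable section

def bC (k : ℕ) : ℝ := (∏ m ∈ Finset.range k, ((1:ℝ)/2 + m)) / (Nat.factorial k)

def aC (k : ℕ) : ℝ := ((∏ m ∈ Finset.range k, ((1:ℝ)/2 + m)) * (∏ m ∈ Finset.range k, ((1:ℝ)/2 + m))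
      / ((∏ m ∈ Finset.range k, ((5:ℝ)/2 + m)) * (Nat.factorial k)))

lemma bC_pos (k : ℕ) : 0 < bC k := by
  unfold bC
  have : 0 < ∏ m ∈ Finset.range k, ((1:ℝ)/2 + m) := Finset.prod_pos (fun m _ => by positivity)
  positivity

lemma bC_succ (k : ℕ) : ((k:ℝ) + 1) * bC (k+1) = (k + 1/2) * bC k := by
  unfold bC
  rw [Finset.prod_range_succ, Nat.factorial_succ]
  have : (Nat.factorial k : ℝ) ≠ 0 := by positivity
  push_cast
  field_simp
  ring

lemma prod_rel (k : ℕ) : (∏ m ∈ Finset.range k, ((1:ℝ)/2 + m)) * ((2*k+1)*(2*k+3))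
    = 3 * ∏ m ∈ Finset.range k, ((5:ℝ)/2 + m) := by
  induction k with
  | zero => norm_num
  | succ k ih =>
    rw [Finset.prod_range_succ, Finset.prod_range_succ]
    push_cast
    linear_combination ((5:ℝ)/2 + k) * ih

lemma aC_eq (k : ℕ) : aC k = 3 * bC k / ((2*k+1)*(2*k+3)) := by
  have h := prod_rel k
  have h5 : 0 < ∏ m ∈ Finset.range k, ((5:ℝ)/2 + m) := Finset.prod_pos (fun m _ => by positivity)
  unfold aC bC
  have : (Nat.factorial k : ℝ) ≠ 0 := by positivity
  have h2 : ((2*k+1)*(2*k+3) : ℝ) ≠ 0 := by positivity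
  rw [mul_div_assoc', div_div, div_eq_div_iff (by positivity) (by positivity)]
  linear_combination (∏ m ∈ Finset.range k, ((1:ℝ)/2 + m)) * (Nat.factorial k : ℝ) * h

lemma aC_nonneg (k : ℕ) : 0 ≤ aC k := by
  rw [aC_eq]
  have := bC_pos k
  positivity

def PN (N : ℕ) (y : ℝ) : ℝ := ∑ k ∈ Finset.range N, bC k * y ^ k
def PN' (N : ℕ) (y : ℝ) : ℝ := ∑ k ∈ Finset.range N, bC k * (k * y ^ (k-1))

lemma PN_deriv (N : ℕ) (y : ℝ) : HasDerivAt (PN N) (PN' N y) y := by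
  unfold PN PN'
  exact HasDerivAt.fun_sum (fun k _ => (hasDerivAt_pow k y).const_mul _)

lemma PN_ode (N : ℕ) (y : ℝ) :
    (1 - y) * PN' N y - PN N y / 2 = - (N * bC N * y ^ (N-1)) := by
  induction N with
  | zero => simp [PN, PN']
  | succ N ih =>
    have h1 : PN (N+1) y = PN N y + bC N * y ^ N := Finset.sum_range_succ _ _
    have h2 : PN' (N+1) y = PN' N y + bC N * (N * y ^ (N-1)) := Finset.sum_range_succ _ _
    have h3 := bC_succ N
    rw [h1, h2]
    push_cast
    rw [h3]
    rcases N with _ | N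
    · simp [PN, PN']; ring
    · simp only [Nat.add_sub_cancel] at *
      linear_combination ih

lemma PN_nonneg (N : ℕ) {y : ℝ} (hy : 0 ≤ y) : 0 ≤ PN N y :=
  Finset.sum_nonneg (fun k _ => mul_nonneg (bC_pos k).le (pow_nonneg hy k))

lemma PN_sq (N : ℕ) {y : ℝ} (hy : 0 ≤ y) (hy1 : y ≤ 1) : (1 - y) * PN N y ^ 2 ≤ 1 := by
  have hd : ∀ y, HasDerivAt (fun y => (1 - y) * PN N y ^ 2)
      (-1 * PN N y ^ 2 + (1-y) * (2 * PN N y * PN' N y)) y := by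
    intro y
    have := ((hasDerivAt_id y).const_sub 1).mul ((PN_deriv N y).pow 2)
    refine HasDerivAt.congr_deriv (f := fun y => (1 - y) * PN N y ^ 2) this ?_
    simp
  have hanti : AntitoneOn (fun y => (1 - y) * PN N y ^ 2) (Set.Icc 0 1) := by
    apply antitoneOn_of_deriv_nonpos (convex_Icc 0 1)
    · exact fun y _ => (hd y).continuousAt.continuousWithinAt
    · exact fun y _ => (hd y).differentiableAt.differentiableWithinAt
    · intro y hy
      rw [interior_Icc] at hy
      rw [(hd y).deriv]
      have h := PN_ode N y
      have h0 := PN_nonneg N hy.1.le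
      have : 0 ≤ N * bC N * y ^ (N-1) :=
        mul_nonneg (mul_nonneg (Nat.cast_nonneg _) (bC_pos N).le) (pow_nonneg hy.1.le _)
      have : -1 * PN N y ^ 2 + (1-y) * (2 * PN N y * PN' N y)
        = 2 * PN N y * ((1 - y) * PN' N y - PN N y / 2) := by ring
      rw [this, h]
      nlinarith [mul_nonneg h0 ‹0 ≤ N * bC N * y ^ (N-1)›]
  have h := hanti (Set.left_mem_Icc.2 zero_le_one) ⟨hy, hy1⟩ hy
  refine h.trans ?_
  rcases N with _ | N
  · simp [PN]
  · have : PN (N+1) 0 = 1 := by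
      unfold PN
      rw [Finset.sum_range_succ']
      simp [bC]
    simp [this]

lemma PN_sqrt (N : ℕ) {y : ℝ} (hy : 0 ≤ y) (hy1 : y ≤ 1) : (1 - y) * PN N y ≤ √(1 - y) := by
  apply Real.le_sqrt_of_sq_le
  have := PN_sq N hy hy1
  nlinarith

lemma int_pow (k : ℕ) : ∫ x in (-1:ℝ)..1, ((1 - x^2) * (x^2)^k : ℝ) = 4 / ((2*(k:ℝ)+1)*(2*k+3)) := by
  have : ∀ x : ℝ, (1 - x^2) * (x^2)^k = x^(2*k) - x^(2*k+2) := fun x => by ring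
  simp_rw [this]
  rw [intervalIntegral.integral_sub (by simp) (by simp), integral_pow, integral_pow]
  have h1 : (-1:ℝ)^(2*k+1) = -1 := Odd.neg_one_pow ⟨k, rfl⟩
  have h2 : (-1:ℝ)^(2*k+2+1) = -1 := Odd.neg_one_pow ⟨k+1, by ring⟩
  rw [h1, h2]
  push_cast
  simp only [one_pow]
  have : (2*k+1 : ℝ) ≠ 0 := by positivity
  have : (2*k+2+1 : ℝ) ≠ 0 := by positivity
  have : (2*k+3 : ℝ) ≠ 0 := by positivity
  field_simp
  ring

lemma sum_aC_le (N : ℕ) : ∑ k ∈ Finset.range N, aC k ≤ 3 * Real.pi / 8 := by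
  have h : ∑ k ∈ Finset.range N, aC k = 3/4 * ∫ x in (-1:ℝ)..1, (1 - x^2) * PN N (x^2) := by
    have : ∀ x : ℝ, (1 - x^2) * PN N (x^2)
        = ∑ k ∈ Finset.range N, bC k * ((1 - x^2) * (x^2)^k) := by
      intro x
      unfold PN
      rw [Finset.mul_sum]
      exact Finset.sum_congr rfl (fun k _ => by ring)
    simp_rw [this]
    rw [intervalIntegral.integral_finsetSum, Finset.mul_sum]
    · refine Finset.sum_congr rfl (fun k _ => ?_)
      rw [intervalIntegral.integral_const_mul, int_pow, aC_eq]
      ring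
    · intro k _
      exact Continuous.intervalIntegrable (by fun_prop) _ _
  have hc : Continuous (PN N) := by unfold PN; fun_prop
  have h2 : ∫ x in (-1:ℝ)..1, (1 - x^2) * PN N (x^2) ≤ ∫ x in (-1:ℝ)..1, √(1 - x^2) := by
    apply intervalIntegral.integral_mono_on (by norm_num)
    · exact Continuous.intervalIntegrable (by fun_prop) _ _
    · exact Continuous.intervalIntegrable (by fun_prop) _ _
    · intro x hx
      exact PN_sqrt N (sq_nonneg x) (by nlinarith [hx.1, hx.2])
  rw [integral_sqrt_one_sub_sq] at h2
  rw [h]; linarith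

lemma aC_summable : Summable aC := summable_of_sum_range_le aC_nonneg sum_aC_le

lemma hypF_eq (x : ℝ) : hypF x = ∑' k, aC k * x ^ k := rfl

lemma aC_bound (k : ℕ) {x : ℝ} (hx : x ∈ Set.Icc (0:ℝ) 1) : ‖aC k * x ^ k‖ ≤ aC k := by
  rw [Real.norm_of_nonneg (mul_nonneg (aC_nonneg k) (pow_nonneg hx.1 k))]
  exact mul_le_of_le_one_right (aC_nonneg k) (pow_le_one₀ hx.1 hx.2)

lemma hypF_le_s12 {x : ℝ} (hx : x ∈ Set.Icc (0:ℝ) 1) : hypF x ≤ 3 * Real.pi / 8 := by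
  rw [hypF_eq]
  calc ∑' k, aC k * x ^ k ≤ ∑' k, aC k :=
        (aC_summable.of_norm_bounded (fun k => aC_bound k hx)).tsum_le_tsum
          (fun k => (le_abs_self _).trans (aC_bound k hx)) aC_summable
    _ ≤ _ := aC_summable.tsum_le_of_sum_range_le sum_aC_le

lemma hypF_cont : ContinuousOn hypF (Set.Icc 0 1) :=
  continuousOn_tsum (f := fun k x => aC k * x ^ k) (fun k => by fun_prop) aC_summable
    (fun k _ hx => aC_bound k hx)

lemma Fstar_cont : ContinuousOn Fstar (Set.Icc (-1) 1) := by
  unfold Fstar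
  apply ContinuousOn.mul (by fun_prop)
  exact hypF_cont.comp (by fun_prop)
    (fun x hx => ⟨sq_nonneg x, by nlinarith [hx.1, hx.2]⟩)

lemma Fstar_le {ρ : ℝ} (h0 : 0 ≤ ρ) (h1 : ρ ≤ 1) : Fstar ρ ≤ ρ := by
  unfold Fstar
  have h := hypF_le_s12 (x := ρ^2) ⟨sq_nonneg ρ, by nlinarith⟩
  have hp := Real.pi_pos
  calc 8 / (3 * Real.pi) * ρ * hypF (ρ^2) ≤ 8 / (3 * Real.pi) * ρ * (3 * Real.pi / 8) := by gcongr
    _ = ρ := by field_simp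

lemma Fstar_neg (ρ : ℝ) : Fstar (-ρ) = - Fstar ρ := by
  unfold Fstar
  rw [neg_sq]; ring

/-- For every half-integer `S ≥ 1/2`, the infimum of `f_S` over
`[−1, S/(S+1))` equals the infimum of `f_S` over `[−1, 0)`, and this infimum is attained
at some point of `[−1, 0)`. -/
theorem fS_inf_attained (n : ℕ) (hn : 1 ≤ n) :
    sInf (fS (spinVal n) '' Set.Ico (-1 : ℝ) (spinVal n / (spinVal n + 1)))
        = sInf (fS (spinVal n) '' Set.Ico (-1 : ℝ) 0)
      ∧ ∃ ρ ∈ Set.Ico (-1 : ℝ) 0,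
          fS (spinVal n) ρ = sInf (fS (spinVal n) '' Set.Ico (-1 : ℝ) 0) := by
  set S := spinVal n with hS
  have hSpos : 0 < S := by
    have : (1:ℝ) ≤ n := by exact_mod_cast hn
    rw [hS]; unfold spinVal; linarith
  set c := (S + 1) / S with hc
  have hc1 : 1 < c := by rw [hc, lt_div_iff₀ hSpos]; linarith
  have hcS : S / (S + 1) = 1 / c := by rw [hc, one_div_div]
  have hcont : ContinuousOn (fS S) (Set.Icc (-1) 0) := by
    unfold fS
    apply ContinuousOn.div
    · exact continuousOn_const.sub (Fstar_cont.mono (Set.Icc_subset_Icc_right zero_le_one))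
    · fun_prop
    · intro x hx
      have : c * x ≤ 0 := mul_nonpos_of_nonneg_of_nonpos (by linarith) hx.2
      change 1 - c * x ≠ 0
      linarith
  obtain ⟨r, hr, hmin⟩ := isCompact_Icc.exists_isMinOn (Set.nonempty_Icc.2 (by norm_num)) hcont
  have hf0 : fS S 0 = 1 := by simp [fS, Fstar]
  have hf1 : fS S (-1) < 1 := by
    unfold fS
    have h := Fstar_le zero_le_one le_rfl
    rw [Fstar_neg, ← hc, div_lt_one (by linarith)]
    linarith
  have hr1 : fS S r < 1 := lt_of_le_of_lt (hmin (by norm_num)) hf1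
  have hrI : r ∈ Set.Ico (-1:ℝ) 0 := by
    refine ⟨hr.1, lt_of_le_of_ne hr.2 ?_⟩
    rintro rfl
    linarith
  have hL2 : IsLeast (fS S '' Set.Ico (-1 : ℝ) 0) (fS S r) := by
    refine ⟨⟨r, hrI, rfl⟩, ?_⟩
    rintro _ ⟨x, hx, rfl⟩
    exact hmin ⟨hx.1, hx.2.le⟩
  have hL1 : IsLeast (fS S '' Set.Ico (-1 : ℝ) (S / (S + 1))) (fS S r) := by
    refine ⟨⟨r, ⟨hrI.1, hrI.2.trans (by positivity)⟩, rfl⟩, ?_⟩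
    rintro _ ⟨x, hx, rfl⟩
    rcases lt_or_ge x 0 with h | h
    · exact hmin ⟨hx.1, h.le⟩
    · have hx2 := hx.2
      rw [hcS, lt_div_iff₀ (by linarith)] at hx2
      have hx1 : x ≤ 1 := by nlinarith
      have hF := Fstar_le h hx1
      have : 1 ≤ fS S x := by
        unfold fS
        rw [← hc, one_le_div (by linarith)]
        nlinarith
      linarith
  rw [hL1.csInf_eq, hL2.csInf_eq]
  exact ⟨rfl, r, hrI, rfl⟩

end
end
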